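/- Let g be a simple complex Lie algebra and N a simple weight g-module. Assume that for every root α ∈ R and every weight vector v ∈ N one has X_α X_{−α} v ∈ ℂv. Then N is a module of degree 1, i.e., every weight space of N is at most one-dimensional. -/

import Mathlib

/-- The weight space, for the weight `χ : H → ℂ`, of a module `N` over a complex Lie
algebra `g` with respect to a subalgebra `H` (a Cartan subalgebra in the applications).
Applying this to `N := g` with the adjoint action yields the root spaces of `g`. -/
def wtSpace {g : Type*} [LieRing g] [LieAlgebra ℂ g] (H : LieSubalgebra ℂ g)
    (N : Type*) [AddCommGroup N] [Module ℂ N] [LieRingModule g N] [LieModule ℂ g N]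
    (χ : H → ℂ) : Submodule ℂ N where
  carrier := {v | ∀ x : H, ⁅(x : g), v⁆ = χ x • v}
  add_mem' := by
    intro u v hu hv x
    rw [lie_add, hu x, hv x, smul_add]
  zero_mem' := by
    intro x
    rw [lie_zero, smul_zero]
  smul_mem' := by
    intro t v hv x
    rw [lie_smul, hv x, smul_comm]

open LieAlgebra LieModule LieAlgebra.IsKilling

/-- If `α` and `α + β` are roots then `ad e` does not vanish on the `β` root space. -/
theorem aux_exists_lie_ne_zero {g : Type*} [LieRing g] [LieAlgebra ℂ g] [FiniteDimensional ℂ g]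
    [LieAlgebra.IsKilling ℂ g] (H : LieSubalgebra ℂ g) [H.IsCartanSubalgebra]
    (α β γ : Weight ℂ H g) (hα : α.IsNonZero)
    (hγ : (γ : H → ℂ) = α + β) {h e f : g} (t : IsSl2Triple h e f)
    (he : e ∈ rootSpace H α) (hf : f ∈ rootSpace H (-α : H → ℂ)) :
    ∃ x ∈ rootSpace H β, ⁅e, x⁆ ≠ 0 := by
  obtain ⟨y, hy, y0⟩ := (chainTop (-α : Weight ℂ H g) β).exists_ne_zero
  have hh : h = coroot α := t.h_eq_coroot hα he hf
  have hf' : f ∈ rootSpace H ((-α : Weight ℂ H g) : H → ℂ) := by simpa using hf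
  have hα' : (-α : Weight ℂ H g).IsNonZero := by simpa using hα
  have prim : t.symm.HasPrimitiveVectorWith y (chainLength (-α) β : ℂ) := by
    refine ⟨y0, ?_, ?_⟩
    · rw [chainLength_smul (-α) β hy, coroot_neg, hh]
      rfl
    · have := lie_mem_genWeightSpace_of_mem_genWeightSpace hf' hy
      rwa [genWeightSpace_add_chainTop _ _ hα'] at this
  have h1 : 1 ≤ chainTopCoeff α β := by
    have := (rootSpace_zsmul_add_ne_bot_iff α β hα 1).1 (by
      rw [one_smul, ← hγ]; exact γ.2)
    exact_mod_cast this.1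
  have h2 := chainBotCoeff_add_chainTopCoeff α β
  have h3 : chainLength (-α) β = chainLength α β := chainLength_neg α β
  have hm := toEnd_pow_apply_mem he hy (chainBotCoeff α β)
  refine ⟨((toEnd ℂ g g e) ^ (chainBotCoeff α β)) y, ?_, ?_⟩
  · convert! hm using 2
    rw [coe_chainTop', Weight.coe_neg, chainTopCoeff_neg]
    simp
  · rw [prim.lie_f_pow_toEnd_f]
    exact prim.pow_toEnd_f_ne_zero_of_eq_nat rfl (by omega)

theorem aux_rootSpace_le {g : Type*} [LieRing g] [LieAlgebra ℂ g] [FiniteDimensional ℂ g]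
    [LieAlgebra.IsKilling ℂ g] (H : LieSubalgebra ℂ g) [H.IsCartanSubalgebra]
    (α : Weight ℂ H g) (hα : α.IsNonZero) (S : LieSubalgebra ℂ g) {x : g}
    (hx : x ∈ rootSpace H α) (x0 : x ≠ 0) (hxS : x ∈ S) : ∀ y ∈ rootSpace H α, y ∈ S := by
  intro y hy
  obtain ⟨k, hk⟩ : ∃ k : ℂ, k • x = y := by
    simpa using (finrank_eq_one_iff_of_nonzero' ⟨x, hx⟩ (by simpa using x0)).mp
      (finrank_rootSpace_eq_one _ hα) ⟨y, hy⟩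
  rw [← hk]
  exact S.smul_mem _ hxS

theorem aux_add {g : Type*} [LieRing g] [LieAlgebra ℂ g] [FiniteDimensional ℂ g]
    [LieAlgebra.IsKilling ℂ g] (H : LieSubalgebra ℂ g) [H.IsCartanSubalgebra]
    (S : LieSubalgebra ℂ g)
    (α β γ : Weight ℂ H g) (hα : α.IsNonZero) (hγ0 : γ.IsNonZero)
    (hγ : (γ : H → ℂ) = α + β) (h1 : ∀ x ∈ rootSpace H α, x ∈ S)
    (h2 : ∀ x ∈ rootSpace H β, x ∈ S) : ∀ x ∈ rootSpace H γ, x ∈ S := by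
  obtain ⟨h, e, f, t, he, hf⟩ := exists_isSl2Triple_of_weight_isNonZero hα
  obtain ⟨x, hx, hx0⟩ := aux_exists_lie_ne_zero H α β γ hα hγ t he hf
  refine aux_rootSpace_le H γ hγ0 S ?_ hx0 (S.lie_mem (h1 _ he) (h2 _ hx))
  rw [hγ]
  exact lie_mem_genWeightSpace_of_mem_genWeightSpace he hx

theorem aux_gen {g : Type*} [LieRing g] [LieAlgebra ℂ g] [FiniteDimensional ℂ g]
    [LieAlgebra.IsKilling ℂ g] (H : LieSubalgebra ℂ g) [H.IsCartanSubalgebra]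
    (b : (rootSystem H).Base) (S : LieSubalgebra ℂ g) (hH : ∀ x ∈ H, x ∈ S)
    (hS : ∀ i ∈ b.support, (∀ x ∈ rootSpace H (i.1 : H → ℂ), x ∈ S) ∧
      (∀ x ∈ rootSpace H (-(i.1 : H → ℂ)), x ∈ S)) (x : g) : x ∈ S := by
  have key : ∀ i : H.root, (∀ x ∈ rootSpace H (i.1 : H → ℂ), x ∈ S) ∧
      (∀ x ∈ rootSpace H (-(i.1 : H → ℂ)), x ∈ S) := by
    intro i
    refine b.induction_add i (p := fun i => (∀ x ∈ rootSpace H (i.1 : H → ℂ), x ∈ S) ∧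
      (∀ x ∈ rootSpace H (-(i.1 : H → ℂ)), x ∈ S)) ?_ hS ?_
    · intro i hi
      have : (((rootSystem H).reflectionPerm i i).1 : H → ℂ) = -(i.1 : H → ℂ) := by
        have := (rootSystem H).root_reflectionPerm i i
        rw [RootPairing.reflection_apply_self] at this
        funext z
        exact LinearMap.congr_fun this z
      rw [this, neg_neg]
      exact ⟨hi.2, hi.1⟩
    · intro i j k hk hi hj
      have hk' : (k.1 : H → ℂ) = j.1 + i.1 := by
        funext z
        have := LinearMap.congr_fun hk z
        simpa [add_comm] using this
      have hj0 := H.isNonZero_coe_root j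
      have hk0 := H.isNonZero_coe_root k
      refine ⟨aux_add H S j.1 i.1 k.1 hj0 hk0 hk' (hS j hj).1 hi.1, ?_⟩
      have := aux_add H S (-j.1) (-i.1) (-k.1) (by simpa using hj0) (by simpa using hk0)
        (by simp [hk', add_comm]) (by simpa using (hS j hj).2) (by simpa using hi.2)
      simpa using this
  have htop := iSup_genWeightSpace_eq_top' ℂ H g
  have hx : x ∈ (⨆ χ : Weight ℂ H g, genWeightSpace g χ).toSubmodule := by
    rw [htop]; trivial
  rw [LieSubmodule.iSup_toSubmodule] at hx
  have hle : (⨆ χ : Weight ℂ H g, (genWeightSpace g χ).toSubmodule) ≤ S.toSubmodule := by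
    refine iSup_le fun χ y hy => ?_
    by_cases h0 : χ.IsZero
    · have hy' : y ∈ rootSpace H (0 : H → ℂ) := by
        have : (χ : H → ℂ) = 0 := h0
        rw [← this]; exact hy
      rw [rootSpace_zero_eq] at hy'
      exact hH y (by simpa using hy')
    · exact (key ⟨χ, by simpa [LieSubalgebra.root] using h0⟩).1 y hy
  exact hle hx

section core

variable {g : Type*} [LieRing g] [LieAlgebra ℂ g] (H : LieSubalgebra ℂ g)
    {N : Type*} [AddCommGroup N] [Module ℂ N] [LieRingModule g N] [LieModule ℂ g N]

theorem wt_lie {α χ : H → ℂ} {x : g} {v : N} (hx : x ∈ wtSpace H g α) (hv : v ∈ wtSpace H N χ) :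
    ⁅x, v⁆ ∈ wtSpace H N (α + χ) := by
  intro h
  rw [leibniz_lie, hx h, hv h]
  simp [add_smul]

/-- Apply a word of Lie algebra elements to a vector. -/
def wAct {ι : Type*} (x : ι → g) (w : List ι) (v : N) : N := w.foldr (fun i u => ⁅x i, u⁆) v

@[simp] theorem wAct_nil {ι : Type*} (x : ι → g) (v : N) : wAct x [] v = v := rfl
@[simp] theorem wAct_cons {ι : Type*} (x : ι → g) (i : ι) (w : List ι) (v : N) :
    wAct x (i :: w) v = ⁅x i, wAct x w v⁆ := rfl
theorem wAct_append {ι : Type*} (x : ι → g) (w w' : List ι) (v : N) :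
    wAct x (w ++ w') v = wAct x w (wAct x w' v) := by simp [wAct]
theorem wAct_smul {ι : Type*} (x : ι → g) (w : List ι) (t : ℂ) (v : N) :
    wAct x w (t • v) = t • wAct x w v := by
  induction w with
  | nil => rfl
  | cons i w ih => simp [ih]

theorem wAct_comm {ι : Type*} (x : ι → g) (y : g) (w : List ι) (h : ∀ i ∈ w, ⁅y, x i⁆ = 0) (v : N) :
    ⁅y, wAct x w v⁆ = wAct x w ⁅y, v⁆ := by
  induction w with
  | nil => rfl
  | cons i w ih =>
    rw [wAct_cons, wAct_cons, leibniz_lie, h i (by simp), zero_lie, zero_add,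
      ih (fun j hj => h j (by simp [hj]))]

theorem wAct_wt {ι : Type*} (x : ι → g) (α : ι → Module.Dual ℂ H)
    (hx : ∀ i, x i ∈ wtSpace H g (α i)) (w : List ι) {χ : H → ℂ} {v : N} (hv : v ∈ wtSpace H N χ) :
    wAct x w v ∈ wtSpace H N (⇑((w.map α).sum) + χ) := by
  induction w with
  | nil =>
    have h : (⇑((([] : List ι).map α).sum) + χ : H → ℂ) = χ := by funext z; simp
    rw [h]
    exact hv
  | cons i w ih =>
    have h : (⇑(((i :: w).map α).sum) + χ : H → ℂ) = ⇑(α i) + (⇑((w.map α).sum) + χ) := by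
      funext z; simp [add_assoc]
    rw [h, wAct_cons]
    exact wt_lie H (hx i) ih

theorem wt_indep [LieRing.IsNilpotent H] (χ : H → ℂ) :
    Disjoint (wtSpace H N χ) (⨆ (ψ : H → ℂ) (_ : ψ ≠ χ), wtSpace H N ψ) := by
  have hle : ∀ ψ : H → ℂ, wtSpace H N ψ ≤ (genWeightSpace N ψ : LieSubmodule ℂ H N).toSubmodule := by
    intro ψ v hv
    refine (mem_genWeightSpace N ψ v).2 fun x => ⟨1, ?_⟩
    have : ⁅x, v⁆ = ψ x • v := hv x
    simp [this]
  have := LieSubmodule.iSupIndep_toSubmodule.2 (iSupIndep_genWeightSpace ℂ H N)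
  refine (this χ).mono (hle χ) ?_
  exact iSup₂_mono fun ψ _ => hle ψ

theorem core [LieRing.IsNilpotent H] {ι : Type*} (α : ι → Module.Dual ℂ H)
    (hli : LinearIndependent ℂ α) (e f : ι → g)
    (he : ∀ i, e i ∈ wtSpace H g (α i)) (hf : ∀ i, f i ∈ wtSpace H g (-α i : Module.Dual ℂ H))
    (hef : ∀ i j, i ≠ j → ⁅e i, f j⁆ = 0)
    (gen : ∀ S : LieSubalgebra ℂ g, (∀ x ∈ H, x ∈ S) → (∀ i, e i ∈ S) → (∀ i, f i ∈ S) → ∀ x, x ∈ S)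
    (hsimple : ∀ q : LieSubmodule ℂ g N, q = ⊥ ∨ q = ⊤)
    (h1 : ∀ i (χ : H → ℂ), ∀ v ∈ wtSpace H N χ, ∃ t : ℂ, ⁅e i, ⁅f i, v⁆⁆ = t • v)
    (h2 : ∀ i (χ : H → ℂ), ∀ v ∈ wtSpace H N χ, ∃ t : ℂ, ⁅f i, ⁅e i, v⁆⁆ = t • v)
    (χ : H → ℂ) (v : N) (hv : v ∈ wtSpace H N χ) (v0 : v ≠ 0) (u : N) (hu : u ∈ wtSpace H N χ) :
    ∃ c : ℂ, c • v = u := by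
  classical
  have hfe : ∀ i j, i ≠ j → ⁅f i, e j⁆ = 0 := fun i j hij => by
    rw [← lie_skew, hef j i hij.symm, neg_zero]
  set Z : Set N := {z | ∃ F E : List ι, z = wAct f F (wAct e E v)} with hZ
  have wtZ : ∀ F E : List ι, wAct f F (wAct e E v) ∈ wtSpace H N
      (⇑((F.map fun i => -α i).sum) + (⇑((E.map α).sum) + χ)) := fun F E =>
    wAct_wt H f (fun i => -α i) hf F (wAct_wt H e α he E hv)
  -- the subalgebra preserving the span
  let S : LieSubalgebra ℂ g :=
    { carrier := {x | ∀ z ∈ Submodule.span ℂ Z, ⁅x, z⁆ ∈ Submodule.span ℂ Z}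
      add_mem' := by
        intro x y hx hy z hz
        rw [add_lie]; exact add_mem (hx z hz) (hy z hz)
      zero_mem' := by intro z _; simp
      smul_mem' := by
        intro c x hx z hz
        rw [smul_lie]; exact Submodule.smul_mem _ _ (hx z hz)
      lie_mem' := by
        intro x y hx hy z hz
        rw [lie_lie]
        exact sub_mem (hx _ (hy z hz)) (hy _ (hx z hz)) }
  have memS : ∀ x : g, (∀ z ∈ Z, ⁅x, z⁆ ∈ Submodule.span ℂ Z) → x ∈ S := by
    intro x hx z hz
    induction hz using Submodule.span_induction with
    | mem z hz => exact hx z hz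
    | zero => simp
    | add a b _ _ ha hb => rw [lie_add]; exact add_mem ha hb
    | smul c a _ ha => rw [lie_smul]; exact Submodule.smul_mem _ _ ha
  have allS : ∀ x, x ∈ S := by
    apply gen S
    · intro x hx
      apply memS
      rintro z ⟨F, E, rfl⟩
      rw [wtZ F E ⟨x, hx⟩]
      exact Submodule.smul_mem _ _ (Submodule.subset_span ⟨F, E, rfl⟩)
    · intro i
      apply memS
      rintro z ⟨F, E, rfl⟩
      by_cases hi : i ∈ F
      · obtain ⟨F1, F2, hF, hi1⟩ := List.eq_append_cons_of_mem hi
        obtain ⟨t, ht⟩ := h1 i _ _ (wtZ F2 E)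
        rw [hF, wAct_append, wAct_comm _ _ _ (fun j hj => hef i j (by rintro rfl; exact hi1 hj)),
          wAct_cons, ht, wAct_smul, ← wAct_append]
        exact Submodule.smul_mem _ _ (Submodule.subset_span ⟨F1 ++ F2, E, rfl⟩)
      · rw [wAct_comm _ _ _ (fun j hj => hef i j (by rintro rfl; exact hi hj))]
        exact Submodule.subset_span ⟨F, i :: E, rfl⟩
    · intro i
      apply memS
      rintro z ⟨F, E, rfl⟩
      exact Submodule.subset_span ⟨i :: F, E, rfl⟩
  have spanTop : Submodule.span ℂ Z = ⊤ := by
    let q : LieSubmodule ℂ g N := { Submodule.span ℂ Z with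
      lie_mem := fun {x z} hz => allS x z hz }
    have hvq : v ∈ q := Submodule.subset_span ⟨[], [], rfl⟩
    rcases hsimple q with hq | hq
    · rw [hq] at hvq
      exact absurd (by simpa using hvq) v0
    · have : q.toSubmodule = ⊤ := by rw [hq]; rfl
      exact this
  -- balanced words act by scalars
  have bal : ∀ E F : List ι, F.Perm E → ∃ t : ℂ, wAct f F (wAct e E v) = t • v := by
    intro E
    induction E with
    | nil =>
      intro F hF
      rw [List.perm_nil.1 hF]
      exact ⟨1, by simp⟩
    | cons i E ih =>
      intro F hF
      have hi : i ∈ F.reverse := by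
        rw [List.mem_reverse]; exact hF.symm.subset (by simp)
      obtain ⟨G2, G1, hG, hi2⟩ := List.eq_append_cons_of_mem hi
      have hF' : F = G1.reverse ++ i :: G2.reverse := by
        have := congrArg List.reverse hG
        simpa using this
      have hp : (G1.reverse ++ G2.reverse).Perm E := by
        rw [hF'] at hF
        exact (List.perm_middle.symm.trans hF).cons_inv
      obtain ⟨s, hs⟩ := h2 i _ _ (wtZ G2.reverse E)
      obtain ⟨t, ht⟩ := ih _ hp
      refine ⟨s * t, ?_⟩
      rw [hF', wAct_append, wAct_cons, wAct_cons,
        ← wAct_comm f (e i) _ (fun j hj => hef i j (by rintro rfl; exact hi2 (by simpa using hj))),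
        hs, wAct_smul, ← wAct_append, ht, smul_smul]
  -- weights
  have wtEq : ∀ F E : List ι, (⇑((F.map fun i => -α i).sum) + (⇑((E.map α).sum) + χ)) = χ →
      F.Perm E := by
    intro F E h
    have h' : (E.map α).sum = (F.map α).sum := by
      apply LinearMap.ext
      intro z
      have := congrFun h z
      have hneg : (F.map fun i => -α i).sum = -(F.map α).sum := by
        clear h this
        induction F with
        | nil => simp
        | cons i F ih => simp only [List.map_cons, List.sum_cons, ih]; abel
      rw [hneg] at this
      simp only [Pi.add_apply, LinearMap.neg_apply] at this
      linear_combination this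
    have hlc : ∀ w : List ι, (w.map α).sum =
        Finsupp.linearCombination ℂ α (w.map fun i => Finsupp.single i (1 : ℂ)).sum := by
      intro w
      induction w with
      | nil => simp
      | cons i w ih => simp [ih]
    have hcount : ∀ (w : List ι) (i : ι),
        ((w.map fun i => Finsupp.single i (1 : ℂ)).sum) i = (w.count i : ℂ) := by
      intro w i
      induction w with
      | nil => simp
      | cons j w ih =>
        rw [List.map_cons, List.sum_cons, Finsupp.add_apply, ih, List.count_cons,
          Finsupp.single_apply]
        by_cases hji : j = i <;> simp [hji, add_comm]
    rw [hlc, hlc] at h'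
    have h'' := hli h'
    rw [List.perm_iff_count]
    intro i
    have := DFunLike.congr_fun h'' i
    rw [hcount, hcount] at this
    exact_mod_cast this.symm
  have hle : Submodule.span ℂ Z ≤
      Submodule.span ℂ {v} ⊔ ⨆ (ψ : H → ℂ) (_ : ψ ≠ χ), wtSpace H N ψ := by
    rw [Submodule.span_le]
    rintro z ⟨F, E, rfl⟩
    by_cases h : (⇑((F.map fun i => -α i).sum) + (⇑((E.map α).sum) + χ)) = χ
    · obtain ⟨t, ht⟩ := bal E F (wtEq F E h)
      rw [ht]
      exact Submodule.mem_sup_left (Submodule.mem_span_singleton.2 ⟨t, rfl⟩)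
    · exact Submodule.mem_sup_right
        (Submodule.mem_iSup_of_mem _ (Submodule.mem_iSup_of_mem h (wtZ F E)))
  have huu := hle (by rw [spanTop]; trivial : u ∈ Submodule.span ℂ Z)
  obtain ⟨a, ha, w, hw, hau⟩ := Submodule.mem_sup.1 huu
  obtain ⟨c, rfl⟩ := Submodule.mem_span_singleton.1 ha
  refine ⟨c, ?_⟩
  have hw' : w ∈ wtSpace H N χ := by
    have : w = u - c • v := by rw [← hau]; abel
    rw [this]
    exact sub_mem hu (Submodule.smul_mem _ _ hv)
  have : w = 0 := (Submodule.disjoint_def.1 (wt_indep H χ)) w hw' hw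
  rw [← hau, this, add_zero]

end core

/-- Let `g` be a simple complex Lie algebra with Cartan subalgebra `H`,
and let `N` be a simple weight `g`-module (`H`-diagonalizable with finite-dimensional
weight spaces, no nontrivial Lie submodule).  If for every root `α` (a nonzero `χ : H → ℂ`
whose adjoint weight space is nonzero), all root vectors `Xa ∈ g_α`, `Xma ∈ g_{-α}` and
every weight vector `v ∈ N` satisfy `X_α X_{-α} v ∈ ℂ v`, then `N` has degree `1`:
every weight space of `N` is at most one-dimensional. -/
theorem stmt_6
    (g : Type*) [LieRing g] [LieAlgebra ℂ g] [FiniteDimensional ℂ g]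
    [LieAlgebra.IsSimple ℂ g]
    (H : LieSubalgebra ℂ g) [H.IsCartanSubalgebra]
    (N : Type*) [AddCommGroup N] [Module ℂ N] [LieRingModule g N] [LieModule ℂ g N]
    [Nontrivial N]
    -- `N` is a weight module
    (hdiag : (⨆ χ : H → ℂ, wtSpace H N χ) = ⊤)
    (hfd : ∀ χ : H → ℂ, FiniteDimensional ℂ (wtSpace H N χ))
    -- `N` is simple
    (hsimple : ∀ q : LieSubmodule ℂ g N, q = ⊥ ∨ q = ⊤)
    -- for every root `α` and every weight vector `v`, `X_α X_{-α} v ∈ ℂ v`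
    (hyp : ∀ α : H → ℂ, α ≠ 0 → wtSpace H g α ≠ ⊥ →
      ∀ Xa ∈ wtSpace H g α, ∀ Xma ∈ wtSpace H g (-α),
        ∀ (χ : H → ℂ), ∀ v ∈ wtSpace H N χ, ∃ t : ℂ, ⁅Xa, ⁅Xma, v⁆⁆ = t • v) :
    ∀ χ : H → ℂ, Module.finrank ℂ (wtSpace H N χ) ≤ 1 := by
  intro χ
  have : IsKilling ℂ g := inferInstance
  obtain ⟨b⟩ : Nonempty (rootSystem H).Base := RootPairing.nonempty_base (rootSystem H)
  have rootwt : ∀ (ψ : H → ℂ) (x : g), x ∈ rootSpace H ψ → x ∈ wtSpace H g ψ := by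
    intro ψ x hx h
    exact lie_eq_smul_of_mem_rootSpace hx h
  have trip : ∀ i : b.support, ∃ e f : g, e ∈ rootSpace H (i.1.1 : H → ℂ) ∧
      f ∈ rootSpace H (-(i.1.1 : H → ℂ)) ∧ e ≠ 0 ∧ f ≠ 0 := by
    intro i
    obtain ⟨h, e, f, t, he, hf⟩ :=
      exists_isSl2Triple_of_weight_isNonZero (H.isNonZero_coe_root i.1)
    exact ⟨e, f, he, hf, t.e_ne_zero, t.f_ne_zero⟩
  choose e f he hf e0 f0 using trip
  have hne : ∀ i : b.support, (i.1.1 : H → ℂ) ≠ 0 := fun i => H.isNonZero_coe_root i.1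
  have hef : ∀ i j, i ≠ j → ⁅e i, f j⁆ = 0 := by
    intro i j hij
    have hm : ⁅e i, f j⁆ ∈ rootSpace H ((i.1.1 : H → ℂ) + -(j.1.1 : H → ℂ)) :=
      lie_mem_genWeightSpace_of_mem_genWeightSpace (he i) (hf j)
    by_contra h0
    have hbot : rootSpace H ((i.1.1 : H → ℂ) + -(j.1.1 : H → ℂ)) ≠ ⊥ := by
      intro hb
      rw [hb] at hm
      exact h0 (by simpa using hm)
    let w : Weight ℂ H g := ⟨_, hbot⟩
    have hw : (w : H → ℂ) = (i.1.1 : H → ℂ) + -(j.1.1 : H → ℂ) := rfl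
    have hw0 : w.IsNonZero := by
      intro hz
      have hz' : (w : H → ℂ) = 0 := hz
      rw [hw, ← sub_eq_add_neg, sub_eq_zero] at hz'
      exact hij (Subtype.ext (Subtype.ext (DFunLike.coe_injective hz')))
    refine b.sub_notMem_range_root i.2 j.2 ⟨⟨w, by simpa [LieSubalgebra.root] using hw0⟩, ?_⟩
    apply LinearMap.ext
    intro z
    have := congrFun hw z
    simpa [sub_eq_add_neg] using this
  have hnb : ∀ (ψ : H → ℂ) (x : g), x ∈ wtSpace H g ψ → x ≠ 0 → wtSpace H g ψ ≠ ⊥ := by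
    intro ψ x hx h0 hb
    rw [hb] at hx
    exact h0 (by simpa using hx)
  by_cases hz : ∃ v ∈ wtSpace H N χ, v ≠ 0
  · obtain ⟨v, hv, v0⟩ := hz
    refine finrank_le_one (⟨v, hv⟩ : wtSpace H N χ) ?_
    rintro ⟨u, hu⟩
    obtain ⟨c, hc⟩ := core H (fun i : b.support => (rootSystem H).root i.1)
      b.linearIndepOn_root e f (fun i => rootwt _ _ (he i)) (fun i => rootwt _ _ (hf i)) hef
      (by
        intro S hH heS hfS x
        refine aux_gen H b S hH ?_ x
        intro i hi
        refine ⟨aux_rootSpace_le H i.1 (H.isNonZero_coe_root i) S (he ⟨i, hi⟩) (e0 _) (heS _), ?_⟩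
        have := aux_rootSpace_le H (-i.1) (by simpa using H.isNonZero_coe_root i) S
          (by simpa using hf ⟨i, hi⟩) (f0 _) (hfS _)
        simpa using this)
      hsimple
      (fun i => hyp _ (hne i) (hnb _ _ (rootwt _ _ (he i)) (e0 i)) _ (rootwt _ _ (he i)) _
        (rootwt _ _ (hf i)))
      (fun i => hyp _ (neg_ne_zero.2 (hne i)) (hnb _ _ (rootwt _ _ (hf i)) (f0 i)) _
        (rootwt _ _ (hf i)) _ (by rw [neg_neg]; exact rootwt _ _ (he i)))
      χ v hv v0 u hu
    exact ⟨c, Subtype.ext hc⟩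
  · push Not at hz
    have : wtSpace H N χ = ⊥ := (Submodule.eq_bot_iff _).2 hz
    rw [this]
    simp
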